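/- arXiv:1208.1449 — 4 statements merged into one kernel-verified Lean document; each statement's English description precedes it below -/
import Mathlib

section
/- Let k ≥ 1 and |m|² ∈ [0,1]. For the uniform weight vector w = (1/k,…,1/k), the vector s = S(1−|m|², |m|²; w) is given by s_1 = |m|²/k + (1−|m|²)/k² and s_i = (1−|m|²)/k² for 2 ≤ i ≤ k. Consequently the limiting eigenvalue vector of the output state consists of |m|²/k + (1−|m|²)/k² with multiplicity one, (1−|m|²)/k² with multiplicity k−1, and 1/k² with multiplicity k²−k. Moreover, the Shannon entropy H of the probability vector ( |m|²/k + (1−|m|²)/k², (1−|m|²)/k² repeated k−1 times, 1/k² repeated k²−k times ) is a decreasing function of |m|² on [0,1]. -/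
open Matrix
open scoped BigOperators

/-- The matrix `H_Σ(x,y;w)`: diagonal entries `(x+y)w_i²`, off-diagonal entries `y w_i w_j`. -/
def HSigma {k : ℕ} (x y : ℝ) (w : Fin k → ℝ) : Matrix (Fin k) (Fin k) ℝ :=
  Matrix.of fun i j => if i = j then (x + y) * w i ^ 2 else y * w i * w j

theorem HSigma_isHermitian {k : ℕ} (x y : ℝ) (w : Fin k → ℝ) : (HSigma x y w).IsHermitian := by
  unfold Matrix.IsHermitian
  ext i j
  simp only [HSigma, conjTranspose_apply, Matrix.of_apply, star_trivial]
  by_cases h : i = j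
  · subst h; simp
  · rw [if_neg h, if_neg (Ne.symm h)]; ring

/-- `S(x,y;w)`: the eigenvalues of `H_Σ(x,y;w)`, listed in decreasing order. -/
noncomputable def Svec {k : ℕ} (x y : ℝ) (w : Fin k → ℝ) : Fin k → ℝ :=
  fun i => (HSigma_isHermitian x y w).eigenvalues
    (Tuple.sort (HSigma_isHermitian x y w).eigenvalues i.rev)

theorem aux_quad {k : ℕ} (hk : 0 < k) (t : ℝ) (i : Fin k) :
    ((HSigma_isHermitian (1 - t) t (fun _ : Fin k => (k : ℝ)⁻¹)).eigenvalues i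
      - (1 - t) / (k : ℝ) ^ 2) *
    ((HSigma_isHermitian (1 - t) t (fun _ : Fin k => (k : ℝ)⁻¹)).eigenvalues i
      - (t / k + (1 - t) / (k : ℝ) ^ 2)) = 0 := by
  set hH := HSigma_isHermitian (1 - t) t (fun _ : Fin k => (k : ℝ)⁻¹) with hHd
  have hk0 : (k : ℝ) ≠ 0 := by positivity
  set e := hH.eigenvalues i with he
  obtain ⟨v, hv⟩ : ∃ v : Fin k → ℝ, v = ⇑(hH.eigenvectorBasis i) := ⟨_, rfl⟩
  have hmv := hH.mulVec_eigenvectorBasis i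
  rw [← hv, ← he] at hmv
  have hvne : v ≠ 0 := by
    intro h
    apply hH.eigenvectorBasis.toBasis.ne_zero i
    ext j
    have := congrFun (hv.symm.trans h) j
    simpa using this
  have hrow : ∀ j, (1 - t) / (k : ℝ) ^ 2 * v j + t / (k : ℝ) ^ 2 * ∑ l, v l = e * v j := by
    intro j
    have := congrFun hmv j
    simp only [Pi.smul_apply, smul_eq_mul] at this
    rw [← this]
    simp only [Matrix.mulVec, dotProduct]
    have h1 : ∀ l, HSigma (1 - t) t (fun _ : Fin k => (k : ℝ)⁻¹) j l * v l =
        (if j = l then (1 - t) / (k : ℝ) ^ 2 * v l else 0) + t / (k : ℝ) ^ 2 * v l := by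
      intro l
      simp only [HSigma, Matrix.of_apply]
      split_ifs <;> field_simp <;> ring
    rw [Finset.sum_congr rfl (fun l _ => h1 l), Finset.sum_add_distrib, ← Finset.mul_sum]
    simp
  have hsum : (e - (t / k + (1 - t) / (k : ℝ) ^ 2)) * ∑ l, v l = 0 := by
    have h2 : ∑ j, ((1 - t) / (k : ℝ) ^ 2 * v j + t / (k : ℝ) ^ 2 * ∑ l, v l) = ∑ j, e * v j :=
      Finset.sum_congr rfl (fun j _ => hrow j)
    rw [Finset.sum_add_distrib, ← Finset.mul_sum, ← Finset.mul_sum] at h2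
    simp only [Finset.sum_const, Finset.card_univ, Fintype.card_fin, nsmul_eq_mul] at h2
    have h3 : t / (k : ℝ) ^ 2 * ((k : ℝ) * ∑ l, v l) = t / k * ∑ l, v l := by field_simp
    rw [h3, ← Finset.mul_sum] at h2
    linarith
  obtain ⟨j, hj⟩ := Function.ne_iff.mp hvne
  rcases mul_eq_zero.mp hsum with h | h
  · rw [h, mul_zero]
  · have := hrow j
    rw [h] at this
    have h5 : (e - (1 - t) / (k : ℝ) ^ 2) * v j = 0 := by linarith
    rw [(mul_eq_zero.mp h5).resolve_right hj, zero_mul]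

theorem aux_sum {k : ℕ} (hk : 0 < k) (t : ℝ) :
    ∑ i, ((HSigma_isHermitian (1 - t) t (fun _ : Fin k => (k : ℝ)⁻¹)).eigenvalues i
      - (1 - t) / (k : ℝ) ^ 2) = t / k := by
  have hk0 : (k : ℝ) ≠ 0 := by positivity
  have h := (HSigma_isHermitian (1 - t) t (fun _ : Fin k => (k : ℝ)⁻¹)).trace_eq_sum_eigenvalues
  have htr : (HSigma (1 - t) t (fun _ : Fin k => (k : ℝ)⁻¹)).trace = (k : ℝ)⁻¹ := by
    simp only [Matrix.trace, Matrix.diag, HSigma, Matrix.of_apply, if_true, Finset.sum_const,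
      Finset.card_univ, Fintype.card_fin, nsmul_eq_mul]
    field_simp
    ring
  rw [htr] at h
  rw [Finset.sum_sub_distrib]
  simp only [RCLike.ofReal_real_eq_id, id] at h
  rw [← h]
  simp only [Finset.sum_const, Finset.card_univ, Fintype.card_fin, nsmul_eq_mul]
  field_simp
  ring

theorem aux_S {k : ℕ} (hk : 0 < k) (t : ℝ) (ht0 : 0 ≤ t) :
      Svec (1 - t) t (fun _ : Fin k => (k : ℝ)⁻¹) ⟨0, hk⟩ =
          t / k + (1 - t) / (k : ℝ) ^ 2 ∧
        ∀ i : Fin k, i ≠ ⟨0, hk⟩ →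
          Svec (1 - t) t (fun _ : Fin k => (k : ℝ)⁻¹) i = (1 - t) / (k : ℝ) ^ 2 := by
  have hq := aux_quad hk t
  have hs := aux_sum hk t
  set S := Svec (1 - t) t (fun _ : Fin k => (k : ℝ)⁻¹) with hS
  set a := (1 - t) / (k : ℝ) ^ 2
  have htk : 0 ≤ t / (k : ℝ) := by positivity
  have hq' : ∀ i, (S i - a) * (S i - (t / k + a)) = 0 := fun i => hq _
  have hs' : ∑ i, (S i - a) = t / k := by
    rw [← hs]
    exact Equiv.sum_comp (Fin.revPerm.trans (Tuple.sort
      (HSigma_isHermitian (1 - t) t (fun _ : Fin k => (k : ℝ)⁻¹)).eigenvalues)) (fun i =>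
      (HSigma_isHermitian (1 - t) t (fun _ : Fin k => (k : ℝ)⁻¹)).eigenvalues i - a)
  have hanti : ∀ i, S i ≤ S ⟨0, hk⟩ := by
    intro i
    apply Tuple.monotone_sort (HSigma_isHermitian (1 - t) t (fun _ : Fin k => (k : ℝ)⁻¹)).eigenvalues
    rw [Fin.rev_le_rev]
    exact Nat.zero_le _
  have hge : ∀ i, 0 ≤ S i - a := by
    intro i
    rcases mul_eq_zero.mp (hq' i) with h | h <;> linarith
  have h0 : S ⟨0, hk⟩ = t / k + a := by
    rcases mul_eq_zero.mp (hq' ⟨0, hk⟩) with h | h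
    · have : ∑ i, (S i - a) = 0 := Finset.sum_eq_zero fun i _ => by
        have := hanti i; have := hge i; linarith
      linarith
    · linarith
  refine ⟨h0, fun i hi => ?_⟩
  rw [← Finset.add_sum_erase _ _ (Finset.mem_univ (⟨0, hk⟩ : Fin k))] at hs'
  have hz : ∑ i ∈ Finset.univ.erase (⟨0, hk⟩ : Fin k), (S i - a) = 0 := by linarith
  have := (Finset.sum_eq_zero_iff_of_nonneg (fun i _ => hge i)).mp hz i (by simp [hi])
  linarith

theorem aux_mult {k : ℕ} (hk : 0 < k) (S : Fin k → ℝ) (A B C : ℝ) (h0 : S ⟨0, hk⟩ = A)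
    (h1 : ∀ i : Fin k, i ≠ ⟨0, hk⟩ → S i = B) :
      (Finset.univ.val.map (fun ij : Fin k × Fin k =>
          if ij.1 = ij.2 then S ij.1 else C)) =
        Multiset.replicate (k ^ 2 - k) C + Multiset.replicate (k - 1) B + {A} := by
  classical
  have hu : (Finset.univ : Finset (Fin k × Fin k)) =
      (Finset.univ : Finset (Fin k)).offDiag.disjUnion (Finset.univ : Finset (Fin k)).diag
        (Finset.disjoint_diag_offDiag _).symm := by
    ext ⟨i, j⟩
    simp [em']
  have hd : (Finset.univ : Finset (Fin k)).diag.val =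
      (Finset.univ : Finset (Fin k)).val.map (fun i => (i, i)) := by
    have : (Finset.univ : Finset (Fin k)).diag =
      (Finset.univ : Finset (Fin k)).map ⟨fun i => (i, i), fun a b h => (Prod.mk.inj h).1⟩ := by
      ext ⟨i, j⟩
      simp only [Finset.mem_diag, Finset.mem_univ, true_and, Finset.mem_map,
        Function.Embedding.coeFn_mk, Prod.mk.injEq]
      constructor
      · intro h; exact ⟨i, Prod.ext rfl h⟩
      · rintro ⟨a, h⟩; exact (Prod.mk.inj h).1.symm.trans (Prod.mk.inj h).2
    rw [this]; rfl
  rw [hu, Finset.disjUnion_val, Multiset.map_add, add_assoc, hd, Multiset.map_map]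
  congr 1
  · rw [Multiset.map_congr rfl (g := fun _ => C), Multiset.map_const']
    · congr 1
      have := Finset.offDiag_card (Finset.univ : Finset (Fin k))
      simpa [sq] using this
    · intro x hx
      have := (Finset.mem_offDiag.mp (Finset.mem_val.mp hx)).2.2
      simp [this]
  · rw [← Finset.insert_erase (Finset.mem_univ (⟨0, hk⟩ : Fin k)),
      Finset.insert_val_of_notMem (by simp), Multiset.map_cons,
      Multiset.map_congr rfl (g := fun _ => B), Multiset.map_const']
    · simp [h0]
      rw [add_comm, Multiset.singleton_add]
    · intro x hx
      have := (Finset.mem_erase.mp (Finset.mem_val.mp hx)).1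
      simp [h1 x this]

theorem aux_anti {k : ℕ} (hk : 0 < k) :
    AntitoneOn (fun t : ℝ =>
        -((t / k + (1 - t) / (k : ℝ) ^ 2) * Real.log (t / k + (1 - t) / (k : ℝ) ^ 2) +
          ((k : ℝ) - 1) * ((1 - t) / (k : ℝ) ^ 2) * Real.log ((1 - t) / (k : ℝ) ^ 2) +
          ((k : ℝ) ^ 2 - k) * ((k : ℝ) ^ 2)⁻¹ * Real.log (((k : ℝ) ^ 2)⁻¹)))
      (Set.Icc 0 1) := by
  have hk0 : (0 : ℝ) < k := by positivity
  have hk1 : (1 : ℝ) ≤ k := by exact_mod_cast hk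
  have hder : ∀ t ∈ interior (Set.Icc (0 : ℝ) 1), HasDerivAt (fun t : ℝ =>
        -((t / k + (1 - t) / (k : ℝ) ^ 2) * Real.log (t / k + (1 - t) / (k : ℝ) ^ 2) +
          ((k : ℝ) - 1) * ((1 - t) / (k : ℝ) ^ 2) * Real.log ((1 - t) / (k : ℝ) ^ 2) +
          ((k : ℝ) ^ 2 - k) * ((k : ℝ) ^ 2)⁻¹ * Real.log (((k : ℝ) ^ 2)⁻¹)))
      (((k : ℝ) - 1) / (k : ℝ) ^ 2 * (Real.log ((1 - t) / (k : ℝ) ^ 2) -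
        Real.log (t / k + (1 - t) / (k : ℝ) ^ 2))) t := by
    intro t ht
    rw [interior_Icc] at ht
    have hq : 0 < (1 - t) / (k : ℝ) ^ 2 := div_pos (by linarith [ht.2]) (by positivity)
    have hp : 0 < t / k + (1 - t) / (k : ℝ) ^ 2 := by
      have := div_pos ht.1 hk0
      linarith
    have dq : HasDerivAt (fun t : ℝ => (1 - t) / (k : ℝ) ^ 2) (-1 / (k : ℝ) ^ 2) t :=
      ((hasDerivAt_id t).const_sub 1).div_const _
    have dp : HasDerivAt (fun t : ℝ => t / k + (1 - t) / (k : ℝ) ^ 2)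
        (1 / k + -1 / (k : ℝ) ^ 2) t := ((hasDerivAt_id t).div_const _).add dq
    have e1 := (Real.hasDerivAt_mul_log hp.ne').comp t dp
    have e2 := ((Real.hasDerivAt_mul_log hq.ne').comp t dq).const_mul ((k : ℝ) - 1)
    have e3 := ((e1.add e2).add_const
      (((k : ℝ) ^ 2 - k) * ((k : ℝ) ^ 2)⁻¹ * Real.log (((k : ℝ) ^ 2)⁻¹))).neg
    refine (e3.congr_deriv ?_).congr_of_eventuallyEq (Filter.Eventually.of_forall fun x => ?_)
    · field_simp
      ring
    · simp only [Function.comp, Pi.add_apply, Pi.neg_apply, mul_assoc]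
  refine antitoneOn_of_deriv_nonpos (convex_Icc 0 1) ?_
    (fun t ht => (hder t ht).differentiableAt.differentiableWithinAt) ?_
  · have c := Real.continuous_mul_log
    have c1 : Continuous fun t : ℝ => (t / k + (1 - t) / (k : ℝ) ^ 2) := by fun_prop
    have c2 : Continuous fun t : ℝ => ((1 - t) / (k : ℝ) ^ 2) := by fun_prop
    have c3 := c.comp c1
    have c4 := c.comp c2
    simp only [mul_assoc]
    exact (((c3.add (c4.const_mul _)).add continuous_const).neg).continuousOn
  · intro t ht
    rw [(hder t ht).deriv]
    rw [interior_Icc] at ht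
    have hq : 0 < (1 - t) / (k : ℝ) ^ 2 := div_pos (by linarith [ht.2]) (by positivity)
    have := Real.log_le_log hq (le_add_of_nonneg_left (div_pos ht.1 hk0).le)
    exact mul_nonpos_of_nonneg_of_nonpos (div_nonneg (by linarith) (by positivity))
      (by linarith)

/-- The case of the uniform weight vector `w = (1/k, …, 1/k)`.  Writing `t = |m|² ∈ [0,1]`:
(1) the vector `s = S(1−t, t; w)` is `s_1 = t/k + (1−t)/k²` and `s_i = (1−t)/k²` for `i ≥ 2`;
(2) consequently the collection of `k²` limiting output eigenvalues
`{w_i w_j : i ≠ j} ∪ {s_i}` is: `t/k + (1−t)/k²` with multiplicity one, `(1−t)/k²` with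
multiplicity `k−1`, and `1/k²` with multiplicity `k²−k`;
(3) the Shannon entropy of this probability vector is a decreasing function of `t` on `[0,1]`. -/
theorem uniform_weights_eigenvalues_and_entropy (k : ℕ) (hk : 0 < k) :
    (∀ t : ℝ, 0 ≤ t → t ≤ 1 →
      Svec (1 - t) t (fun _ : Fin k => (k : ℝ)⁻¹) ⟨0, hk⟩ =
          t / k + (1 - t) / (k : ℝ) ^ 2 ∧
        ∀ i : Fin k, i ≠ ⟨0, hk⟩ →
          Svec (1 - t) t (fun _ : Fin k => (k : ℝ)⁻¹) i = (1 - t) / (k : ℝ) ^ 2) ∧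
    (∀ t : ℝ, 0 ≤ t → t ≤ 1 →
      (Finset.univ.val.map (fun ij : Fin k × Fin k =>
          if ij.1 = ij.2 then Svec (1 - t) t (fun _ : Fin k => (k : ℝ)⁻¹) ij.1
          else (k : ℝ)⁻¹ * (k : ℝ)⁻¹)) =
        Multiset.replicate (k ^ 2 - k) (((k : ℝ) ^ 2)⁻¹) +
          Multiset.replicate (k - 1) ((1 - t) / (k : ℝ) ^ 2) +
          {t / k + (1 - t) / (k : ℝ) ^ 2}) ∧
    AntitoneOn (fun t : ℝ =>
        -((t / k + (1 - t) / (k : ℝ) ^ 2) * Real.log (t / k + (1 - t) / (k : ℝ) ^ 2) +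
          ((k : ℝ) - 1) * ((1 - t) / (k : ℝ) ^ 2) * Real.log ((1 - t) / (k : ℝ) ^ 2) +
          ((k : ℝ) ^ 2 - k) * ((k : ℝ) ^ 2)⁻¹ * Real.log (((k : ℝ) ^ 2)⁻¹)))
      (Set.Icc 0 1) := by
  refine ⟨fun t h0 _ => aux_S hk t h0, fun t h0 _ => ?_, aux_anti hk⟩
  have h := aux_S hk t h0
  have hc : (k : ℝ)⁻¹ * (k : ℝ)⁻¹ = ((k : ℝ) ^ 2)⁻¹ := by rw [sq, mul_inv]
  rw [hc]
  exact aux_mult hk _ _ _ _ h.1 h.2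
end

section
/- Let W = diag(w_1,…,w_k) be a real diagonal k × k matrix, let x, y ∈ R, and let p ≥ 1. Then Σ_{∅ ≠ A ⊆ [p]} x^{p−|A|} y^{|A|} ∏_{i=1}^{|A|} Tr[W^{2(a_{i+1}−a_i)}] = Σ_{i=1}^k s_i^p − x^p Tr[W^{2p}], where for A = {a_1 < a_2 < ⋯ < a_{|A|}} one sets a_{|A|+1} − a_{|A|} := p + a_1 − a_{|A|}, and s = S(x,y;w) is the eigenvalue vector of the matrix H_Σ(x,y;w). -/
open Matrix
open scoped BigOperators

/-- For a nonempty subset `A = {a_1 < a_2 < ⋯ < a_r} ⊆ [p]`, the product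
`∏_{i=1}^r Tr[W^{2(a_{i+1} − a_i)}]` of traces over the cyclic successive gaps of `A`,
where `a_{r+1} − a_r` is understood as `p + a_1 − a_r`. -/
noncomputable def cyclicGapProd {k : ℕ} (p : ℕ) (W : Matrix (Fin k) (Fin k) ℝ)
    (A : Finset (Fin p)) : ℝ :=
  ((A.sort (· ≤ ·)).zipWith
    (fun a b : Fin p =>
      if a.1 < b.1 then Matrix.trace (W ^ (2 * (b.1 - a.1)))
      else Matrix.trace (W ^ (2 * (p + b.1 - a.1))))
    ((A.sort (· ≤ ·)).rotate 1)).prod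


/-- Path weight. -/
noncomputable def cgE {k : ℕ} (w : Fin k → ℝ) (n : ℕ) (j : Fin k) : ℕ → List ℕ → ℝ
  | a, [] => w j ^ (2 * (n - a) - 1)
  | a, b :: l => (∑ i, w i ^ (2 * (b - a))) * cgE w n j b l

/-- Word matrix. -/
noncomputable def cgV {k : ℕ} (x y : ℝ) (w : Fin k → ℝ) (n : ℕ) :
    List ℕ → Matrix (Fin k) (Fin k) ℝ
  | [] => x ^ n • Matrix.diagonal w ^ (2 * n)
  | a :: l => Matrix.of fun i j =>
      x ^ (n - (l.length + 1)) * y ^ (l.length + 1) * (w i ^ (2 * a + 1) * cgE w n j a l)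

theorem cgE_succ {k : ℕ} (w : Fin k → ℝ) (n : ℕ) (j : Fin k) (l : List ℕ) :
    ∀ a, a < n → (∀ b ∈ l, b < n) → cgE w (n + 1) j a l = cgE w n j a l * w j ^ 2 := by
  induction l with
  | nil =>
    intro a ha _
    simp only [cgE]
    rw [← pow_add]
    congr 1
    omega
  | cons b l ih =>
    intro a ha h
    simp only [cgE]
    rw [ih b (h b (by simp)) (fun c hc => h c (by simp [hc]))]
    ring

theorem cgE_append {k : ℕ} (w : Fin k → ℝ) (n : ℕ) (j : Fin k) (l : List ℕ) :
    ∀ a, a < n → (∀ b ∈ l, b < n) →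
      cgE w (n + 1) j a (l ++ [n]) = (∑ m, cgE w n m a l * w m) * w j := by
  induction l with
  | nil =>
    intro a ha _
    simp only [cgE, List.nil_append]
    congr 1
    · refine Finset.sum_congr rfl fun m _ => ?_
      rw [← pow_succ]
      congr 1
      omega
    · simp
  | cons b l ih =>
    intro a ha h
    simp only [cgE, List.cons_append]
    rw [ih b (h b (by simp)) (fun c hc => h c (by simp [hc])), ← mul_assoc, Finset.mul_sum]
    simp only [mul_assoc]

theorem cgE_close {k : ℕ} (w : Fin k → ℝ) (n c : ℕ) (l : List ℕ) :
    ∀ a, c ≤ a → a < n → (∀ b ∈ l, b < n) → (a :: l).Pairwise (· < ·) →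
      ∑ j, w j ^ (2 * c + 1) * cgE w n j a l =
      ((a :: l).zipWith (fun a b : ℕ =>
        if a < b then ∑ i, w i ^ (2 * (b - a)) else ∑ i, w i ^ (2 * (n + b - a)))
        (l ++ [c])).prod := by
  induction l with
  | nil =>
    intro a hc ha _ _
    simp only [cgE, List.nil_append, List.zipWith_cons_cons, List.zipWith_nil_left,
      List.prod_cons, List.prod_nil, mul_one]
    rw [if_neg (by omega)]
    refine Finset.sum_congr rfl fun m _ => ?_
    rw [← pow_add]
    congr 1
    omega
  | cons b l ih =>
    intro a hc ha h hs
    have hab : a < b := (List.pairwise_cons.1 hs).1 b (by simp)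
    rw [List.cons_append, List.zipWith_cons_cons, List.prod_cons, if_pos hab,
      ← ih b (by omega) (h b (by simp)) (fun c hc => h c (by simp [hc]))
        (List.pairwise_cons.1 hs).2, Finset.mul_sum]
    refine Finset.sum_congr rfl fun m _ => ?_
    simp only [cgE]
    ring

theorem HSigma_eq {k : ℕ} (x y : ℝ) (w : Fin k → ℝ) :
    HSigma x y w = x • Matrix.diagonal w ^ 2 + y • Matrix.vecMulVec w w := by
  ext i j
  by_cases h : i = j
  · subst h
    simp [HSigma, Matrix.diagonal_pow, Matrix.vecMulVec_apply]; ring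
  · simp [HSigma, Matrix.diagonal_pow, Matrix.vecMulVec_apply, h]; ring

theorem cgV_diag {k : ℕ} (x y : ℝ) (w : Fin k → ℝ) (n : ℕ) (L : List ℕ)
    (h : ∀ b ∈ L, b < n) (hl : L.length ≤ n) :
    cgV x y w n L * (x • Matrix.diagonal w ^ 2) = cgV x y w (n + 1) L := by
  cases L with
  | nil =>
    simp only [cgV]
    rw [Matrix.smul_mul, Matrix.mul_smul, smul_smul, ← pow_add, ← pow_succ]
    rfl
  | cons a l =>
    ext i j
    simp only [List.length_cons] at hl
    simp only [cgV, Matrix.diagonal_pow, Matrix.mul_smul, Matrix.smul_apply,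
      Matrix.mul_diagonal, Matrix.of_apply, smul_eq_mul, Pi.pow_apply]
    rw [cgE_succ w n j l a (h a (by simp)) (fun c hc => h c (by simp [hc])),
      show n + 1 - (l.length + 1) = n - (l.length + 1) + 1 by omega, pow_succ]
    ring

theorem cgV_rank {k : ℕ} (x y : ℝ) (w : Fin k → ℝ) (n : ℕ) (L : List ℕ)
    (h : ∀ b ∈ L, b < n) :
    cgV x y w n L * (y • Matrix.vecMulVec w w) = cgV x y w (n + 1) (L ++ [n]) := by
  cases L with
  | nil =>
    ext i j
    simp [cgV, cgE, Matrix.diagonal_pow, Matrix.vecMulVec_apply]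
    ring
  | cons a l =>
    ext i j
    simp only [cgV, List.cons_append, Matrix.mul_smul, Matrix.smul_apply,
      Matrix.mul_apply, Matrix.of_apply, smul_eq_mul, Matrix.vecMulVec_apply]
    rw [cgE_append w n j l a (h a (by simp)) (fun c hc => h c (by simp [hc])),
      List.length_append, List.length_singleton, Nat.add_sub_add_right, Finset.sum_mul,
      Finset.mul_sum, Finset.mul_sum]
    refine Finset.sum_congr rfl fun m _ => ?_
    ring

theorem cg_sort_insert (n : ℕ) (A : Finset ℕ) (h : ∀ b ∈ A, b < n) :
    (insert n A).sort (· ≤ ·) = A.sort (· ≤ ·) ++ [n] := by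
  have hp : (A.sort (· ≤ ·) ++ [n]).Pairwise (· ≤ ·) := by
    rw [List.pairwise_append]
    refine ⟨Finset.pairwise_sort _ _, by simp, ?_⟩
    intro a ha b hb
    rw [Finset.mem_sort] at ha
    have := h a ha
    simp at hb
    omega
  have hn : (A.sort (· ≤ ·) ++ [n]).Nodup := by
    rw [List.nodup_append]
    refine ⟨Finset.sort_nodup _ _, by simp, ?_⟩
    intro a ha b hb
    rw [Finset.mem_sort] at ha
    have := h a ha
    simp at hb
    omega
  rw [← (List.toFinset_sort (· ≤ ·) hn).2 hp]
  congr 1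
  ext a
  simp [or_comm]

theorem HSigma_pow {k : ℕ} (x y : ℝ) (w : Fin k → ℝ) (n : ℕ) :
    HSigma x y w ^ n = ∑ A ∈ (Finset.range n).powerset, cgV x y w n (A.sort (· ≤ ·)) := by
  induction n with
  | zero => simp [cgV]
  | succ n ih =>
    rw [Finset.range_add_one, Finset.sum_powerset_insert (by simp), pow_succ, ih, HSigma_eq,
      mul_add, Finset.sum_mul, Finset.sum_mul]
    congr 1
    · refine Finset.sum_congr rfl fun A hA => ?_
      rw [Finset.mem_powerset] at hA
      refine cgV_diag x y w n _ ?_ ?_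
      · intro b hb
        rw [Finset.mem_sort] at hb
        exact Finset.mem_range.1 (hA hb)
      · rw [Finset.length_sort]
        simpa using Finset.card_le_card hA
    · refine Finset.sum_congr rfl fun A hA => ?_
      rw [Finset.mem_powerset] at hA
      rw [cg_sort_insert n A fun b hb => Finset.mem_range.1 (hA hb)]
      refine cgV_rank x y w n _ ?_
      intro b hb
      rw [Finset.mem_sort] at hb
      exact Finset.mem_range.1 (hA hb)

theorem cg_trace_diag {k : ℕ} (w : Fin k → ℝ) (m : ℕ) :
    Matrix.trace (Matrix.diagonal w ^ m) = ∑ i, w i ^ m := by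
  simp [Matrix.diagonal_pow, Matrix.trace]

theorem cg_sum_S {k : ℕ} (x y : ℝ) (w : Fin k → ℝ) (p : ℕ) :
    ∑ i, Svec x y w i ^ p = Matrix.trace (HSigma x y w ^ p) := by
  have hA := HSigma_isHermitian x y w
  have h1 : ∑ i, Svec x y w i ^ p = ∑ i, hA.eigenvalues i ^ p := by
    unfold Svec
    exact Equiv.sum_comp (Fin.revPerm.trans (Tuple.sort hA.eigenvalues))
      (fun i => hA.eigenvalues i ^ p)
  rw [h1]
  conv_rhs => rw [hA.spectral_theorem]
  rw [← map_pow, Unitary.conjStarAlgAut_apply, Matrix.trace_mul_cycle]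
  simp [Matrix.diagonal_pow, Matrix.trace]

theorem cg_trace_V {k : ℕ} (x y : ℝ) (w : Fin k → ℝ) (p : ℕ) (A : Finset (Fin p))
    (hA : A.Nonempty) :
    Matrix.trace (cgV x y w p ((A.map Fin.valEmbedding).sort (· ≤ ·))) =
      x ^ (p - A.card) * y ^ A.card * cyclicGapProd p (Matrix.diagonal w) A := by
  have hm : (A.sort (· ≤ ·)).map Fin.val = (A.map Fin.valEmbedding).sort (· ≤ ·) :=
    Finset.map_sort Fin.valEmbedding A (· ≤ ·) (· ≤ ·) (fun a _ b _ => Iff.rfl)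
  have hlen : (A.sort (· ≤ ·)).length = A.card := Finset.length_sort _
  have hs : (A.sort (· ≤ ·)).Pairwise (· < ·) := (Finset.sortedLT_sort A).pairwise
  rw [← hm, cyclicGapProd]
  simp only [cg_trace_diag]
  generalize A.sort (· ≤ ·) = L at *
  cases L with
  | nil =>
    have := hA.card_pos
    simp only [List.length_nil] at hlen
    omega
  | cons a l =>
    simp only [List.length_cons] at hlen
    have hs' : (a.1 :: l.map Fin.val).Pairwise (· < ·) := by
      rw [← List.map_cons (f := Fin.val), List.pairwise_map]; exact hs
    have := cgE_close w p a.1 (l.map Fin.val) a.1 le_rfl a.2 (by simp) hs'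
    simp only [List.map_cons, cgV, Matrix.trace, Matrix.diag_apply, Matrix.of_apply,
      List.length_map, hlen]
    rw [← Finset.mul_sum, this]
    congr 1
    rw [← List.map_cons (f := Fin.val), show l.map Fin.val ++ [a.1] = (l ++ [a]).map Fin.val by simp,
      List.zipWith_map]
    simp

/-- **Combinatorial trace identity.**  For a real diagonal matrix `W = diag(w)`, reals `x, y`
and `p ≥ 1`,
`Σ_{∅≠A⊆[p]} x^{p−|A|} y^{|A|} ∏_i Tr[W^{2(a_{i+1}−a_i)}] = Σ_i s_i^p − x^p Tr[W^{2p}]`,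
where `s = S(x,y;w)`. -/
theorem cyclic_gap_trace_identity
    (k p : ℕ) (hp : 1 ≤ p) (w : Fin k → ℝ) (x y : ℝ) :
    ∑ A ∈ Finset.univ.powerset.filter Finset.Nonempty,
        x ^ (p - A.card) * y ^ A.card * cyclicGapProd p (Matrix.diagonal w) A =
      ∑ i, Svec x y w i ^ p - x ^ p * Matrix.trace (Matrix.diagonal w ^ (2 * p)) := by
  rw [cg_sum_S, HSigma_pow, Matrix.trace_sum]
  have h1 : (Finset.range p).powerset =
      (Finset.univ : Finset (Finset (Fin p))).map
        (Finset.mapEmbedding Fin.valEmbedding).toEmbedding := by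
    ext B
    simp only [Finset.mem_powerset, Finset.mem_map, Finset.mem_univ, true_and]
    constructor
    · intro hB
      refine ⟨Finset.univ.filter (fun i => i.1 ∈ B), ?_⟩
      ext b
      simp only [RelEmbedding.coe_toEmbedding, Finset.mapEmbedding_apply, Finset.mem_map,
        Finset.mem_filter, Finset.mem_univ, true_and, Fin.valEmbedding_apply]
      constructor
      · rintro ⟨i, hi, rfl⟩
        exact hi
      · intro hb
        exact ⟨⟨b, Finset.mem_range.1 (hB hb)⟩, hb, rfl⟩
    · rintro ⟨A, rfl⟩ b hb
      simp only [RelEmbedding.coe_toEmbedding, Finset.mapEmbedding_apply, Finset.mem_map,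
        Fin.valEmbedding_apply] at hb
      obtain ⟨i, _, rfl⟩ := hb
      simp
  rw [h1, Finset.sum_map]
  simp only [RelEmbedding.coe_toEmbedding, Finset.mapEmbedding_apply]
  rw [← Finset.sum_filter_add_sum_filter_not Finset.univ Finset.Nonempty]
  have h2 : (Finset.univ : Finset (Finset (Fin p))).filter (fun A => ¬ A.Nonempty) = {∅} := by
    ext A
    simp
  rw [h2, Finset.sum_singleton]
  simp only [Finset.map_empty, Finset.sort_empty, cgV, Matrix.trace_smul, smul_eq_mul,
    add_sub_cancel_right, Finset.powerset_univ]
  refine Finset.sum_congr rfl fun A hA => ?_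
  exact (cg_trace_V x y w p A (Finset.mem_filter.1 hA).2).symm
end

section
/- Fix n ≥ 1 and k ≥ 1, let U_1,…,U_k ∈ U(n) be arbitrary unitary matrices, let w_1,…,w_k ≥ 0 with Σ w_i = 1, and let ψ = Σ_{i,j=1}^n a_{ij} e_i ⊗ e_j ∈ C^n ⊗ C^n be a unit vector with coefficient matrix A = (a_{ij}). Then the largest eigenvalue of Z = Σ_{i,j=1}^k w_i w_j (U_i ⊗ conj(U_j)) ψψ^* (U_i ⊗ conj(U_j))^* satisfies λ_1(Z) ≥ (|Tr A|²/n) Σ_{i=1}^k w_i². -/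
open Matrix
open scoped BigOperators

/-- Eigenvalues of a matrix (junk value `0` if not Hermitian). -/
noncomputable def eigsOf {N : Type*} [Fintype N] [DecidableEq N] (M : Matrix N N ℂ) : N → ℝ :=
  if h : M.IsHermitian then h.eigenvalues else 0

/-- The output state `Z = [Φ ⊗ conj(Φ)](ψψ*) = Σ_{i,j} w_i w_j (U_i ⊗ conj(U_j)) ψψ*
(U_i ⊗ conj(U_j))^*`, where `ψ` has coefficient matrix `A`. -/
noncomputable def Zmat (n k : ℕ) (w : Fin k → ℝ)
    (U : Fin k → Matrix (Fin n) (Fin n) ℂ) (A : Matrix (Fin n) (Fin n) ℂ) :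
    Matrix (Fin n × Fin n) (Fin n × Fin n) ℂ :=
  Matrix.of fun ab cd => ∑ i, ∑ j, ((w i * w j : ℝ) : ℂ) *
    ((U i * A * (U j)ᴴ) ab.1 ab.2 * star ((U i * A * (U j)ᴴ) cd.1 cd.2))

lemma aux_rayleigh {N : Type*} [Fintype N] [DecidableEq N] (M : Matrix N N ℂ)
    (h : M.IsHermitian) (x : N → ℂ) (L : ℝ) (hL : ∀ i, h.eigenvalues i ≤ L) :
    (star x ⬝ᵥ (M *ᵥ x)).re ≤ L * ∑ i, ‖x i‖ ^ 2 := by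
  have key : ∀ y : N → ℂ, (star y ⬝ᵥ y) = ((∑ i, ‖y i‖ ^ 2 : ℝ) : ℂ) := by
    intro y
    simp only [dotProduct, Pi.star_apply, Complex.ofReal_sum]
    refine Finset.sum_congr rfl fun i _ => ?_
    rw [Complex.ofReal_pow]
    exact Complex.conj_mul' (y i)
  set V : Matrix N N ℂ := (h.eigenvectorUnitary : Matrix N N ℂ) with hV
  have hVV : V * Vᴴ = 1 := by
    have := (Matrix.mem_unitaryGroup_iff).1 h.eigenvectorUnitary.2
    simpa [Matrix.star_eq_conjTranspose] using this
  have hM : M = V * diagonal (fun i => (h.eigenvalues i : ℂ)) * Vᴴ := by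
    have := h.spectral_theorem
    rw [Unitary.conjStarAlgAut_apply] at this
    exact this
  set y := Vᴴ *ᵥ x with hy
  have hsy : star y = star x ᵥ* V := by
    rw [hy, star_mulVec, conjTranspose_conjTranspose]
  have h1 : star x ⬝ᵥ (M *ᵥ x) = ((∑ i, h.eigenvalues i * ‖y i‖ ^ 2 : ℝ) : ℂ) := by
    have : star x ⬝ᵥ (M *ᵥ x) =
        star y ⬝ᵥ (diagonal (fun i => (h.eigenvalues i : ℂ)) *ᵥ y) := by
      rw [hsy, hy, ← dotProduct_mulVec, mulVec_mulVec, mulVec_mulVec, ← hM]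
    rw [this]
    simp only [dotProduct, Pi.star_apply, Complex.ofReal_sum, mulVec_diagonal]
    refine Finset.sum_congr rfl fun i _ => ?_
    have := Complex.conj_mul' (y i)
    push_cast
    rw [← this]
    simp only [Complex.star_def]
    ring
  have h2 : ∑ i, ‖y i‖ ^ 2 = ∑ i, ‖x i‖ ^ 2 := by
    have : star y ⬝ᵥ y = star x ⬝ᵥ x := by
      rw [hsy, hy, ← dotProduct_mulVec, mulVec_mulVec, hVV, one_mulVec]
    rw [key, key] at this
    exact_mod_cast this
  rw [h1, Complex.ofReal_re, ← h2, Finset.mul_sum]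
  exact Finset.sum_le_sum fun i _ => mul_le_mul_of_nonneg_right (hL i) (by positivity)

lemma aux_herm (n k : ℕ) (w : Fin k → ℝ)
    (U : Fin k → Matrix (Fin n) (Fin n) ℂ) (A : Matrix (Fin n) (Fin n) ℂ) :
    (Zmat n k w U A).IsHermitian := by
  ext ab cd
  simp only [Zmat, conjTranspose_apply, of_apply, star_sum, star_mul', star_star,
    Complex.star_def, Complex.conj_ofReal, Complex.conj_conj]
  refine Finset.sum_congr rfl fun i _ => Finset.sum_congr rfl fun j _ => ?_
  ring

lemma aux_quad_s12 (n k : ℕ) (w : Fin k → ℝ)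
    (U : Fin k → Matrix (Fin n) (Fin n) ℂ) (A : Matrix (Fin n) (Fin n) ℂ)
    (x : Fin n × Fin n → ℂ) (hx : x = fun p => if p.1 = p.2 then 1 else 0) :
    star x ⬝ᵥ (Zmat n k w U A *ᵥ x) =
      ((∑ i, ∑ j, w i * w j * ‖(U i * A * (U j)ᴴ).trace‖ ^ 2 : ℝ) : ℂ) := by
  have hq : star x ⬝ᵥ (Zmat n k w U A *ᵥ x) = ∑ a, ∑ c, Zmat n k w U A (a, a) (c, c) := by
    subst hx
    simp [dotProduct, mulVec, Fintype.sum_prod_type, apply_ite]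
  rw [hq]
  simp only [Zmat, of_apply]
  have : ∀ i j, ((w i * w j * ‖(U i * A * (U j)ᴴ).trace‖ ^ 2 : ℝ) : ℂ) =
      ∑ a, ∑ c, ((w i * w j : ℝ) : ℂ) *
    ((U i * A * (U j)ᴴ) a a * star ((U i * A * (U j)ᴴ) c c)) := by
    intro i j
    generalize U i * A * (U j)ᴴ = B
    rw [Complex.ofReal_mul, Complex.ofReal_pow, ← Complex.mul_conj', Matrix.trace]
    rw [map_sum, Finset.sum_mul_sum]
    simp only [Finset.mul_sum, diag_apply, Complex.star_def]
  simp only [Complex.ofReal_sum, this]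
  calc _ = ∑ a, ∑ i, ∑ c, ∑ j, ((w i * w j : ℝ) : ℂ) *
        ((U i * A * (U j)ᴴ) a a * star ((U i * A * (U j)ᴴ) c c)) :=
        Finset.sum_congr rfl fun a _ => Finset.sum_comm
    _ = ∑ i, ∑ a, ∑ j, ∑ c, ((w i * w j : ℝ) : ℂ) *
        ((U i * A * (U j)ᴴ) a a * star ((U i * A * (U j)ᴴ) c c)) := by
        rw [Finset.sum_comm]
        exact Finset.sum_congr rfl fun i _ => Finset.sum_congr rfl fun a _ => Finset.sum_comm
    _ = _ := Finset.sum_congr rfl fun i _ => Finset.sum_comm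

/-- **Hayden–Winter trick for random unitary channels** (deterministic, fixed dimension).
For any unitaries `U_1, …, U_k ∈ U(n)`, any weights `w_i ≥ 0` with `Σ w_i = 1` and any unit
vector `ψ` with coefficient matrix `A`, the largest eigenvalue of
`Z = [Φ ⊗ conj(Φ)](ψψ*)` satisfies `λ₁(Z) ≥ (|Tr A|²/n) Σ_i w_i²`. -/
theorem largest_eigenvalue_lower_bound
    (n k : ℕ) (hn : 0 < n) (hk : 0 < k)
    (U : Fin k → Matrix.unitaryGroup (Fin n) ℂ)
    (w : Fin k → ℝ) (hw0 : ∀ i, 0 ≤ w i) (hw1 : ∑ i, w i = 1)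
    (A : Matrix (Fin n) (Fin n) ℂ) (hA : (A * Aᴴ).trace = 1) :
    ‖A.trace‖ ^ 2 / n * ∑ i, w i ^ 2 ≤
      ⨆ ij : Fin n × Fin n,
        eigsOf (Zmat n k w (fun i => (U i : Matrix (Fin n) (Fin n) ℂ)) A) ij := by

  set Z := Zmat n k w (fun i => (U i : Matrix (Fin n) (Fin n) ℂ)) A with hZ
  have hH : Z.IsHermitian := aux_herm _ _ _ _ _
  have he : eigsOf Z = hH.eigenvalues := by simp [eigsOf, hH]
  have hL : ∀ i, hH.eigenvalues i ≤ ⨆ ij, eigsOf Z ij := by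
    intro i
    rw [he]
    exact le_ciSup (Set.finite_range hH.eigenvalues).bddAbove i
  have h1 := aux_rayleigh Z hH (fun p => if p.1 = p.2 then 1 else 0) _ hL
  rw [hZ, aux_quad_s12 n k w _ A _ rfl, Complex.ofReal_re, ← hZ] at h1
  have h2 : ∑ p : Fin n × Fin n, ‖(if p.1 = p.2 then 1 else 0 : ℂ)‖ ^ 2 = (n : ℝ) := by
    rw [Fintype.sum_prod_type]
    have : ∀ a b : Fin n, ‖(if a = b then 1 else 0 : ℂ)‖ ^ 2 = if a = b then (1 : ℝ) else 0 := by
      intro a b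
      split_ifs <;> simp
    simp only [this]
    simp
  rw [h2] at h1
  have hn' : (0 : ℝ) < n := by exact_mod_cast hn
  have h3 : ‖A.trace‖ ^ 2 * ∑ i, w i ^ 2 ≤
      ∑ i, ∑ j, w i * w j * ‖((U i : Matrix (Fin n) (Fin n) ℂ) * A *
        (U j : Matrix (Fin n) (Fin n) ℂ)ᴴ).trace‖ ^ 2 := by
    rw [Finset.mul_sum]
    refine Finset.sum_le_sum fun i _ => ?_
    have ht : ((U i : Matrix (Fin n) (Fin n) ℂ) * A *
        (U i : Matrix (Fin n) (Fin n) ℂ)ᴴ).trace = A.trace := by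
      have hu := (Matrix.mem_unitaryGroup_iff').1 (U i).2
      rw [Matrix.star_eq_conjTranspose] at hu
      rw [Matrix.trace_mul_comm, ← Matrix.mul_assoc, hu, Matrix.one_mul]
    refine le_trans (le_of_eq ?_) (Finset.single_le_sum (f := fun j => w i * w j *
      ‖((U i : Matrix (Fin n) (Fin n) ℂ) * A *
        (U j : Matrix (Fin n) (Fin n) ℂ)ᴴ).trace‖ ^ 2) (fun j _ => ?_) (Finset.mem_univ i))
    · simp only [ht]
      ring
    · exact mul_nonneg (mul_nonneg (hw0 i) (hw0 j)) (by positivity)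
  rw [div_mul_eq_mul_div, div_le_iff₀ hn']
  exact h3.trans h1
end

section
/- Fix p ≥ 2 and identify {1,…,2p} with {1^T,…,p^T, 1^B,…,p^B}. Define γ, δ ∈ S_{2p} by γ(i^T) = (i−1)^T and γ(i^B) = (i+1)^B (indices modulo p), and δ(i^T) = i^B, δ(i^B) = i^T for all i. Then for every permutation β ∈ S_{2p}, |γ^{-1}β| + |β^{-1}δ| + |β| ≥ 2p, where |σ| = 2p − #σ and #σ is the number of cycles of σ. Equality holds if and only if β ∈ {id, δ, γ} when p = 2, and if and only if β = δ when p ≥ 3. -/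
open Equiv
open scoped BigOperators

/-- number of cycles (including fixed points) of a permutation -/
def numCycles {α : Type*} [Fintype α] [DecidableEq α] (σ : Equiv.Perm α) : ℕ :=
  σ.cycleType.card + (Fintype.card α - σ.cycleType.sum)

/-- the length `|σ|` of a permutation: the minimal number of transpositions whose product
is `σ`, i.e. (cardinality of the underlying set) − (number of cycles of `σ`). -/
def lengthPerm {α : Type*} [Fintype α] [DecidableEq α] (σ : Equiv.Perm α) : ℕ :=
  Fintype.card α - numCycles σ

/-- The wiring permutation `γ ∈ S_{2p}` on `{1ᵀ,…,pᵀ, 1ᴮ,…,pᴮ}` (encoded as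
`Fin p ⊕ Fin p`, `inl` = top, `inr` = bottom): `γ(iᵀ) = (i−1)ᵀ`, `γ(iᴮ) = (i+1)ᴮ`. -/
def gammaPerm (p : ℕ) : Equiv.Perm (Fin p ⊕ Fin p) :=
  Equiv.sumCongr (finRotate p)⁻¹ (finRotate p)

/-- The wiring permutation `δ ∈ S_{2p}`: `δ(iᵀ) = iᴮ`, `δ(iᴮ) = iᵀ`. -/
def deltaPerm (p : ℕ) : Equiv.Perm (Fin p ⊕ Fin p) :=
  Equiv.sumComm (Fin p) (Fin p)

open Equiv Equiv.Perm

lemma numCycles_eq_card {α κ : Type*} [Fintype α] [DecidableEq α] [Fintype κ]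
    (σ : Equiv.Perm α) (f : α → κ) (hf : Function.Surjective f)
    (h : ∀ x y, f x = f y ↔ σ.SameCycle x y) : numCycles σ = Fintype.card κ := by
  classical
  have hsum : Fintype.card α - σ.cycleType.sum = Fintype.card (Function.fixedPoints σ) := by
    rw [Equiv.Perm.card_fixedPoints]
  have hcard : σ.cycleType.card = Fintype.card σ.cycleFactorsFinset := by
    rw [Equiv.Perm.cycleType_def]; simp
  unfold numCycles
  rw [hsum, hcard, ← Fintype.card_sum]
  have hx : ∀ c : σ.cycleFactorsFinset, ∃ x, c.1 x ≠ x := by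
    rintro ⟨c, hc⟩
    obtain ⟨x, hx, -⟩ := (mem_cycleFactorsFinset_iff.1 hc).1
    exact ⟨x, hx⟩
  choose g hg using hx
  have hcyc : ∀ c : σ.cycleFactorsFinset, σ.cycleOf (g c) = c.1 := by
    intro c
    exact (cycle_is_cycleOf (Equiv.Perm.mem_support.2 (hg c)) c.2).symm
  have hmv : ∀ c : σ.cycleFactorsFinset, σ (g c) ≠ g c := by
    intro c
    rw [← cycleOf_apply_self, hcyc c]
    exact hg c
  apply Fintype.card_of_bijective (f := fun z => f (Sum.elim g (fun y => y.1) z))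
  constructor
  · rintro (c | y) (d | z) hh
    · have := (h _ _).1 hh
      have h2 := this.cycleOf_eq
      simp only [Sum.elim_inl] at h2
      rw [hcyc, hcyc] at h2
      rw [Subtype.ext h2]
    · have := (h _ _).1 hh
      exact absurd (this.apply_eq_self_iff.2 z.2) (hmv c)
    · have := (h _ _).1 hh
      exact absurd (this.apply_eq_self_iff.1 y.2) (hmv d)
    · have := (h _ _).1 hh
      have := this.eq_of_left y.2
      simp only [Sum.elim_inr] at this
      rw [Subtype.ext this]
  · intro k
    obtain ⟨x, rfl⟩ := hf k
    by_cases hx : σ x = x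
    · exact ⟨Sum.inr ⟨x, hx⟩, rfl⟩
    · refine ⟨Sum.inl ⟨σ.cycleOf x, cycleOf_mem_cycleFactorsFinset_iff.2
        (Equiv.Perm.mem_support.2 hx)⟩, ?_⟩
      rw [h]
      simp only [Sum.elim_inl]
      set c : σ.cycleFactorsFinset := ⟨σ.cycleOf x, cycleOf_mem_cycleFactorsFinset_iff.2
        (Equiv.Perm.mem_support.2 hx)⟩ with hc
      have h1 := hg c
      have : (σ.cycleOf x) (g c) ≠ g c := h1
      by_contra hn
      exact this (cycleOf_apply_of_not_sameCycle (fun h => hn h.symm))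

/-- invariant functions -/
def fixSub {α : Type*} (σ : Equiv.Perm α) : Submodule ℚ (α → ℚ) where
  carrier := {f | ∀ x, f (σ x) = f x}
  add_mem' := by intro a b ha hb x; simp [ha x, hb x]
  zero_mem' := by intro x; simp
  smul_mem' := by intro c a ha x; simp [ha x]

lemma fixSub_sameCycle {α κ : Type*} {σ : Equiv.Perm α} {f : α → κ} (hf : ∀ x, f (σ x) = f x)
    {x y : α} (h : σ.SameCycle x y) : f x = f y := by
  obtain ⟨i, rfl⟩ := h
  have hinv : ∀ x, f (σ⁻¹ x) = f x := by
    intro x; rw [← hf (σ⁻¹ x)]; simp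
  induction i using Int.induction_on with
  | zero => simp
  | succ n ih => rw [add_comm, zpow_add, zpow_one, Equiv.Perm.mul_apply, hf]; exact ih
  | pred n ih => rw [sub_eq_add_neg, add_comm, zpow_add, zpow_neg_one, Equiv.Perm.mul_apply, hinv]; exact ih

lemma finrank_fixSub {α : Type*} [Fintype α] [DecidableEq α] (σ : Equiv.Perm α) :
    Module.finrank ℚ (fixSub σ) = numCycles σ := by
  classical
  let s := SameCycle.setoid σ
  rw [numCycles_eq_card σ (fun x => (Quotient.mk s x)) Quotient.mk_surjective
    (fun x y => Quotient.eq (r := s)), ← Module.finrank_fintype_fun_eq_card ℚ]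
  refine LinearEquiv.finrank_eq ?_
  refine LinearEquiv.symm
    { toFun := fun g => ⟨fun x => g (Quotient.mk s x), ?_⟩
      invFun := fun f => Quotient.lift f.1 (fun x y h => fixSub_sameCycle f.2 h)
      map_add' := ?_
      map_smul' := ?_
      left_inv := ?_
      right_inv := ?_ }
  · intro x
    refine congrArg g (Quotient.sound ?_)
    exact sameCycle_apply_left.2 (SameCycle.refl _ _)
  · intro a b; rfl
  · intro a b; rfl
  · intro g; ext q; induction q using Quotient.inductionOn; rfl
  · intro f; rfl

lemma numCycles_le {α : Type*} [Fintype α] [DecidableEq α] (σ : Equiv.Perm α) :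
    numCycles σ ≤ Fintype.card α := by
  rw [← finrank_fixSub, ← Module.finrank_fintype_fun_eq_card ℚ]
  exact Submodule.finrank_le _

lemma inf_le_fix {α : Type*} (σ τ : Equiv.Perm α) :
    fixSub σ ⊓ fixSub τ ≤ fixSub (σ * τ) := by
  rintro f ⟨h1, h2⟩ x
  rw [Equiv.Perm.mul_apply, h1, h2]

lemma length_mul_le {α : Type*} [Fintype α] [DecidableEq α] (σ τ : Equiv.Perm α) :
    lengthPerm (σ * τ) ≤ lengthPerm σ + lengthPerm τ := by
  have h1 := Submodule.finrank_sup_add_finrank_inf_eq (fixSub σ) (fixSub τ)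
  have h2 := Submodule.finrank_mono (inf_le_fix σ τ)
  have h3 := Submodule.finrank_le (fixSub σ ⊔ fixSub τ)
  rw [Module.finrank_fintype_fun_eq_card] at h3
  have := numCycles_le σ
  have := numCycles_le τ
  have := numCycles_le (σ * τ)
  simp only [finrank_fixSub] at *
  unfold lengthPerm
  omega

lemma length_mul_eq {α : Type*} [Fintype α] [DecidableEq α] (σ τ : Equiv.Perm α)
    (h : lengthPerm σ + lengthPerm τ ≤ lengthPerm (σ * τ)) (x : α) :
    (σ * τ).SameCycle x (σ x) := by
  classical
  have h1 := Submodule.finrank_sup_add_finrank_inf_eq (fixSub σ) (fixSub τ)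
  have h2 := Submodule.finrank_mono (inf_le_fix σ τ)
  have h3 := Submodule.finrank_le (fixSub σ ⊔ fixSub τ)
  rw [Module.finrank_fintype_fun_eq_card] at h3
  have := numCycles_le σ
  have := numCycles_le τ
  have := numCycles_le (σ * τ)
  have he : fixSub σ ⊓ fixSub τ = fixSub (σ * τ) := by
    apply Submodule.eq_of_le_of_finrank_le (inf_le_fix σ τ)
    simp only [finrank_fixSub] at *
    unfold lengthPerm at h
    omega
  have hm : (fun y => if (σ * τ).SameCycle x y then (1:ℚ) else 0) ∈ fixSub (σ * τ) := by
    intro y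
    simp only [sameCycle_apply_right]
  rw [← he] at hm
  have := hm.1 x
  by_contra hn
  simp only [hn, SameCycle.refl, if_true, if_false] at this
  exact zero_ne_one this

lemma length_inv {α : Type*} [Fintype α] [DecidableEq α] (σ : Equiv.Perm α) :
    lengthPerm σ⁻¹ = lengthPerm σ := by
  simp [lengthPerm, numCycles]

lemma sign_length {α : Type*} [Fintype α] [DecidableEq α] (σ : Equiv.Perm α) :
    Equiv.Perm.sign σ = (-1) ^ lengthPerm σ := by
  rw [sign_of_cycleType]
  have h1 : σ.cycleType.sum ≤ Fintype.card α := by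
    rw [sum_cycleType]; exact Finset.card_le_univ _
  have h2 : lengthPerm σ + 2 * σ.cycleType.card = σ.cycleType.sum + σ.cycleType.card := by
    have := numCycles_le σ
    unfold lengthPerm
    unfold numCycles at *
    omega
  rw [← h2, pow_add, pow_mul]; simp

lemma even_iff {α : Type*} [Fintype α] [DecidableEq α] (σ τ : Equiv.Perm α) :
    lengthPerm (σ * τ) % 2 = (lengthPerm σ + lengthPerm τ) % 2 := by
  have h : ((-1 : ℤˣ)) ^ lengthPerm (σ * τ) = (-1) ^ (lengthPerm σ + lengthPerm τ) := by
    rw [pow_add, ← sign_length, ← sign_length, ← sign_length, Equiv.Perm.sign_mul]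
  rcases Nat.even_or_odd (lengthPerm (σ * τ)) with h1 | h1 <;>
  rcases Nat.even_or_odd (lengthPerm σ + lengthPerm τ) with h2 | h2
  · rw [Nat.even_iff] at h1 h2; omega
  · rw [h1.neg_one_pow, h2.neg_one_pow] at h; exact absurd h (by decide)
  · rw [h1.neg_one_pow, h2.neg_one_pow] at h; exact absurd h (by decide)
  · rw [Nat.odd_iff] at h1 h2; omega

lemma length_one_eq {α : Type*} [Fintype α] [DecidableEq α] (σ : Equiv.Perm α)
    (h : lengthPerm σ = 0) : σ = 1 := by
  ext x
  have h1 := length_mul_eq σ σ⁻¹ (by rw [length_inv, h]; omega) x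
  rw [mul_inv_cancel] at h1
  simpa [sameCycle_one] using h1.symm

lemma length_id {α : Type*} [Fintype α] [DecidableEq α] :
    lengthPerm (1 : Equiv.Perm α) = 0 := by
  simp [lengthPerm, numCycles]

/-- classifying map for δ -/
def fD (p : ℕ) : Fin p ⊕ Fin p → Fin p := Sum.elim id id
/-- classifying map for γ⁻¹δ -/
def fE (p : ℕ) : Fin p ⊕ Fin p → Fin p := Sum.elim ⇑((finRotate p)⁻¹) id

lemma fD_iff (p : ℕ) (x y : Fin p ⊕ Fin p) :
    fD p x = fD p y ↔ (deltaPerm p).SameCycle x y := by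
  constructor
  · intro h
    have key : x = y ∨ y = deltaPerm p x := by
      rcases x with x | x <;> rcases y with y | y <;> simp_all [fD, deltaPerm]
    rcases key with rfl | rfl
    · exact SameCycle.refl _ _
    · exact sameCycle_apply_right.2 (SameCycle.refl _ _)
  · apply fixSub_sameCycle
    rintro (x | x) <;> simp [fD, deltaPerm]

lemma fE_iff (p : ℕ) (x y : Fin p ⊕ Fin p) :
    fE p x = fE p y ↔ ((gammaPerm p)⁻¹ * deltaPerm p).SameCycle x y := by
  constructor
  · intro h
    have key : x = y ∨ y = ((gammaPerm p)⁻¹ * deltaPerm p) x := by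
      rw [mul_apply, eq_inv_iff_eq]
      simp only [fE, deltaPerm, gammaPerm] at *
      generalize finRotate p = r at *
      rcases x with x | x <;> rcases y with y | y
      · simpa using h
      · right; simp at h; simp [← h]
      · right; simp at h; simp [h]
      · left; simpa using h
    rcases key with rfl | h
    · exact SameCycle.refl _ _
    · rw [h]; exact sameCycle_apply_right.2 (SameCycle.refl _ _)
  · apply fixSub_sameCycle
    simp only [fE, deltaPerm, gammaPerm] at *
    generalize finRotate p = r at *
    rintro (x | x) <;> simp [Equiv.Perm.inv_def]

lemma fD_len (p : ℕ) : lengthPerm (deltaPerm p) = p := by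
  rw [lengthPerm, numCycles_eq_card _ (fD p) (fun i => ⟨Sum.inl i, rfl⟩) (fD_iff p)]
  simp

lemma fE_len (p : ℕ) : lengthPerm ((gammaPerm p)⁻¹ * deltaPerm p) = p := by
  rw [lengthPerm, numCycles_eq_card _ (fE p) (fun i => ⟨Sum.inr i, rfl⟩) (fE_iff p)]
  simp

lemma gamma_iff (p : ℕ) (hp : 2 ≤ p) (x y : Fin p ⊕ Fin p) :
    x.isLeft = y.isLeft ↔ (gammaPerm p).SameCycle x y := by
  constructor
  · intro h
    have hc : ∀ x y : Fin p, (finRotate p).SameCycle x y := by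
      intro x y
      obtain ⟨n, rfl⟩ : ∃ n, p = n + 2 := ⟨p - 2, by omega⟩
      have hs : ∀ z : Fin (n + 2), finRotate (n+2) z ≠ z := by
        intro z
        have := support_finRotate (n := n)
        rw [← Equiv.Perm.mem_support, this]; simp
      exact (isCycle_finRotate).sameCycle (hs x) (hs y)
    have hr : ∀ (i : ℤ) (x : Fin p), (gammaPerm p ^ i) (Sum.inr x) = Sum.inr ((finRotate p ^ i) x) := by
      intro i x
      have : gammaPerm p = sumCongrHom _ _ ((finRotate p)⁻¹, finRotate p) := rfl
      rw [this, ← map_zpow]; rfl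
    have hl : ∀ (i : ℤ) (x : Fin p), (gammaPerm p ^ i) (Sum.inl x) = Sum.inl (((finRotate p)⁻¹ ^ i) x) := by
      intro i x
      have : gammaPerm p = sumCongrHom _ _ ((finRotate p)⁻¹, finRotate p) := rfl
      rw [this, ← map_zpow]; rfl
    rcases x with x | x <;> rcases y with y | y
    · obtain ⟨i, hi⟩ := (sameCycle_inv.2 (hc x y))
      exact ⟨i, by rw [hl, hi]⟩
    · simp at h
    · simp at h
    · obtain ⟨i, hi⟩ := (hc x y)
      exact ⟨i, by rw [hr, hi]⟩
  · apply fixSub_sameCycle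
    rintro (x | x) <;> simp [gammaPerm]

lemma gamma_len (p : ℕ) (hp : 2 ≤ p) : lengthPerm (gammaPerm p) = 2 * p - 2 := by
  have hs : Function.Surjective (Sum.isLeft : Fin p ⊕ Fin p → Bool) := by
    rintro (_ | _)
    · exact ⟨Sum.inr ⟨0, by omega⟩, rfl⟩
    · exact ⟨Sum.inl ⟨0, by omega⟩, rfl⟩
  rw [lengthPerm, numCycles_eq_card _ _ hs (gamma_iff p hp)]
  simp; omega

lemma core (p : ℕ) (hp : 2 ≤ p) (β : Equiv.Perm (Fin p ⊕ Fin p)) :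
    2 * p ≤ lengthPerm ((gammaPerm p)⁻¹ * β) + lengthPerm (β⁻¹ * deltaPerm p) +
      lengthPerm β ∧
    (lengthPerm ((gammaPerm p)⁻¹ * β) + lengthPerm (β⁻¹ * deltaPerm p) +
          lengthPerm β = 2 * p → β = deltaPerm p ∨ (p = 2 ∧ (β = 1 ∨ β = gammaPerm p))) := by
  have e1 : β * (β⁻¹ * deltaPerm p) = deltaPerm p := by group
  have e2 : ((gammaPerm p)⁻¹ * β) * (β⁻¹ * deltaPerm p) = (gammaPerm p)⁻¹ * deltaPerm p := by group
  have e3 : ((gammaPerm p)⁻¹ * β) * β⁻¹ = (gammaPerm p)⁻¹ := by group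
  have t1 := length_mul_le β (β⁻¹ * deltaPerm p)
  have t2 := length_mul_le ((gammaPerm p)⁻¹ * β) (β⁻¹ * deltaPerm p)
  have t3 := length_mul_le ((gammaPerm p)⁻¹ * β) β⁻¹
  have q1 := length_mul_eq β (β⁻¹ * deltaPerm p)
  have q2 := length_mul_eq ((gammaPerm p)⁻¹ * β) (β⁻¹ * deltaPerm p)
  have q3 := length_mul_eq ((gammaPerm p)⁻¹ * β) β⁻¹
  have p1 := even_iff β (β⁻¹ * deltaPerm p)
  have p2 := even_iff ((gammaPerm p)⁻¹ * β) (β⁻¹ * deltaPerm p)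
  have p3 := even_iff ((gammaPerm p)⁻¹ * β) β⁻¹
  rw [e1, fD_len] at t1 q1 p1
  rw [e2, fE_len] at t2 q2 p2
  rw [e3, length_inv, length_inv, gamma_len p hp] at t3 q3 p3
  simp only [← fD_iff] at q1
  simp only [← fE_iff] at q2
  simp only [sameCycle_inv, ← gamma_iff p hp] at q3
  have gl : ∀ x, ((gammaPerm p)⁻¹ x).isLeft = x.isLeft := by
    intro x
    rw [gamma_iff p hp]
    exact sameCycle_apply_left.1 (by simpa using SameCycle.refl _ _)
  have r1 : lengthPerm β + lengthPerm (β⁻¹ * deltaPerm p) ≤ p →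
      lengthPerm ((gammaPerm p)⁻¹ * β) + lengthPerm β ≤ 2 * p - 2 → β = 1 := by
    intro h1 h2
    ext x
    have a := q1 h1 x
    have b := q3 h2 x
    rw [mul_apply, gl] at b
    rw [Equiv.Perm.one_apply]
    generalize β x = y at a b
    clear * - a b
    rcases x with x | x <;> rcases y with y | y <;> simp_all [fD]
  have r2 : lengthPerm ((gammaPerm p)⁻¹ * β) + lengthPerm (β⁻¹ * deltaPerm p) ≤ p →
      lengthPerm ((gammaPerm p)⁻¹ * β) + lengthPerm β ≤ 2 * p - 2 → β = gammaPerm p := by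
    intro h1 h2
    suffices (gammaPerm p)⁻¹ * β = 1 from (inv_mul_eq_one.1 this).symm
    ext x
    have a := q2 h1 x
    have b := q3 h2 x
    rw [Equiv.Perm.one_apply]
    generalize ((gammaPerm p)⁻¹ * β) x = y at a b
    unfold fE at a
    clear * - a b
    generalize finRotate p = r at *
    rcases x with x | x <;> rcases y with y | y <;> simp_all
  have r3 : lengthPerm (β⁻¹ * deltaPerm p) = 0 → β = deltaPerm p := by
    intro h
    exact inv_mul_eq_one.1 (length_one_eq _ h)
  have l1 : β = 1 → lengthPerm (β⁻¹ * deltaPerm p) = p := by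
    rintro rfl; simpa using fD_len p
  have l2 : β = gammaPerm p → lengthPerm (β⁻¹ * deltaPerm p) = p := by
    rintro rfl; exact fE_len p
  generalize lengthPerm ((gammaPerm p)⁻¹ * β) = b at *
  generalize lengthPerm (β⁻¹ * deltaPerm p) = c at *
  generalize lengthPerm β = a at *
  clear q1 q2 q3
  have main : 2 * p ≤ b + c + a := by
    by_contra hlt
    have := l1 (r1 (by omega) (by omega))
    omega
  refine ⟨main, fun he => ?_⟩
  by_cases hc : c = 0
  · exact Or.inl (r3 hc)
  · right
    have h3 : b + a ≤ 2 * p - 2 := by omega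
    by_cases h1 : a + c ≤ p
    · have hb := r1 h1 h3
      have := l1 hb
      exact ⟨by omega, Or.inl hb⟩
    · have hb := r2 (by omega) h3
      have := l2 hb
      exact ⟨by omega, Or.inr hb⟩

/-- **The geodesic inequality** `|γ⁻¹β| + |β⁻¹δ| + |β| ≥ 2p`, for every `β ∈ S_{2p}`, with
equality iff `β ∈ {id, δ, γ}` when `p = 2` and iff `β = δ` when `p ≥ 3`. -/
theorem geodesic_inequality (p : ℕ) (hp : 2 ≤ p) (β : Equiv.Perm (Fin p ⊕ Fin p)) :
    2 * p ≤ lengthPerm ((gammaPerm p)⁻¹ * β) + lengthPerm (β⁻¹ * deltaPerm p) +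
      lengthPerm β ∧
    (p = 2 →
      (lengthPerm ((gammaPerm p)⁻¹ * β) + lengthPerm (β⁻¹ * deltaPerm p) +
          lengthPerm β = 2 * p ↔ β = 1 ∨ β = deltaPerm p ∨ β = gammaPerm p)) ∧
    (3 ≤ p →
      (lengthPerm ((gammaPerm p)⁻¹ * β) + lengthPerm (β⁻¹ * deltaPerm p) +
          lengthPerm β = 2 * p ↔ β = deltaPerm p)) := by
  obtain ⟨h1, h2⟩ := core p hp β
  have hd : β = deltaPerm p → lengthPerm ((gammaPerm p)⁻¹ * β) + lengthPerm (β⁻¹ * deltaPerm p) +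
          lengthPerm β = 2 * p := by
    rintro rfl
    rw [inv_mul_cancel, length_id, fE_len, fD_len]; omega
  refine ⟨h1, fun h => ⟨fun he => ?_, ?_⟩, fun h => ⟨fun he => ?_, hd⟩⟩
  · rcases h2 he with h | ⟨-, h | h⟩
    · exact Or.inr (Or.inl h)
    · exact Or.inl h
    · exact Or.inr (Or.inr h)
  · rintro (rfl | hb | rfl)
    · rw [mul_one, inv_one, one_mul, length_inv, length_id, gamma_len p hp, fD_len]; omega
    · exact hd hb
    · rw [inv_mul_cancel, length_id, fE_len, gamma_len p hp]; omega
  · rcases h2 he with h | ⟨h', -⟩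
    · exact h
    · omega
end
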